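/- Let Ω ⊂ ℝ² be a bounded measurable set, G(x,y) = (1/(2π)) log ‖x − y‖, and let f be a bounded measurable function on Ω. Then the volume potential V f(x) = ∫_Ω G(x,y) f(y) dy is continuously differentiable on ℝ², and its gradient is given by differentiation under the integral sign: ∇ V f(x) = ∫_Ω (x − y)/(2π ‖x − y‖²) f(y) dy for every x ∈ ℝ². -/

import Mathlib

open MeasureTheory Real

/-!
The potential is a convolution `f ⋆ k` of a compactly supported `L^∞` density with a kernel that is
differentiable off the origin, and both `k` and its derivative `k'` are locally integrable. In
dimension at least two, almost every translate of a given segment misses the singularity, so the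
fundamental theorem of calculus along the segment and Fubini give
`(f ⋆ k) (x + v) - (f ⋆ k) x = ∫₀¹ (f ⋆ k') (x + s v) v ds`.
Since `f ⋆ k'` is continuous (approximate `k'` in `L¹`, on the compact set that matters near a given
point, by continuous functions), it is the derivative of `f ⋆ k`.
-/

open Set Topology ContinuousLinearMap Module
open scoped Convolution ENNReal Interval Pointwise

section Continuity

variable {G E E' F : Type*} [NormedAddCommGroup G] [ProperSpace G] [MeasurableSpace G]
  [BorelSpace G] {μ : Measure G} [μ.IsAddHaarMeasure]
  [NormedAddCommGroup E] [NormedSpace ℝ E] [NormedAddCommGroup E'] [NormedSpace ℝ E']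
  [NormedAddCommGroup F] [NormedSpace ℝ F]
  (L : E →L[ℝ] E' →L[ℝ] F) {f : G → E} {g : G → E'}

theorem convolutionExists_of_memLp_top_of_integrable (hf : MemLp f ∞ μ) (hg : Integrable g μ) :
    ConvolutionExists f g L μ := fun x =>
  memLp_one_iff_integrable.1 <|
    L.memLp_of_bilin 1 hf (memLp_one_iff_integrable.2 (hg.comp_sub_left x))

theorem norm_convolution_le_lpNorm_top_mul_integral_norm (hf : MemLp f ∞ μ) (hg : Integrable g μ)
    (x : G) : ‖(f ⋆[L, μ] g) x‖ ≤ ‖L‖ * lpNorm f ∞ μ * ∫ y, ‖g y‖ ∂μ := by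
  have hgx : Integrable (fun t => ‖L‖ * lpNorm f ∞ μ * ‖g (x - t)‖) μ :=
    (hg.comp_sub_left x).norm.const_mul _
  calc ‖(f ⋆[L, μ] g) x‖ ≤ ∫ t, ‖L‖ * lpNorm f ∞ μ * ‖g (x - t)‖ ∂μ := by
        refine norm_integral_le_of_norm_le hgx ?_
        filter_upwards [ae_le_lpNorm_exponent_top hf] with t ht
        exact L.le_of_opNorm₂_le_of_le le_rfl ht le_rfl
    _ = ‖L‖ * lpNorm f ∞ μ * ∫ y, ‖g y‖ ∂μ := by
        rw [integral_const_mul, integral_sub_left_eq_self (fun y => ‖g y‖) μ x]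

theorem continuous_convolution_of_memLp_top_of_integrable
    (hf : MemLp f ∞ μ) (hg : Integrable g μ) : Continuous (f ⋆[L, μ] g) := by
  refine continuous_of_uniform_approx_of_continuous fun u hu => ?_
  obtain ⟨ε, hε, hεu⟩ := Metric.mem_uniformity_dist.1 hu
  set C := ‖L‖ * lpNorm f ∞ μ
  have hC : 0 ≤ C := mul_nonneg (norm_nonneg L) lpNorm_nonneg
  obtain ⟨g', hg'supp, hgg', hg'cont, hg'⟩ :=
    hg.exists_hasCompactSupport_integral_sub_le (ε := ε / (C + 1)) (by positivity)
  refine ⟨f ⋆[L, μ] g',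
    hg'supp.continuous_convolution_right L (hf.locallyIntegrable le_top) hg'cont, fun x => hεu ?_⟩
  have hsub : (f ⋆[L, μ] g) x - (f ⋆[L, μ] g') x = (f ⋆[L, μ] (g - g')) x := by
    simp only [convolution_def, Pi.sub_apply, map_sub]
    exact (integral_sub (convolutionExists_of_memLp_top_of_integrable L hf hg x)
      (convolutionExists_of_memLp_top_of_integrable L hf hg' x)).symm
  calc dist ((f ⋆[L, μ] g) x) ((f ⋆[L, μ] g') x) ≤ C * ∫ y, ‖(g - g') y‖ ∂μ := by
        rw [dist_eq_norm, hsub]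
        exact norm_convolution_le_lpNorm_top_mul_integral_norm L hf (hg.sub hg') x
    _ ≤ C * (ε / (C + 1)) := by gcongr; exact hgg'
    _ < ε := by
        rw [mul_div_assoc', div_lt_iff₀ (by positivity)]
        linarith

omit [MeasurableSpace G] [BorelSpace G] in
theorem exists_isCompact_forall_convolution_integrand_eq
    (hcf : HasCompactSupport f) (g : G → E') (x₀ : G) :
    ∃ s, IsCompact s ∧
      ∀ᶠ x in 𝓝 x₀, ∀ t, L (f t) (g (x - t)) = L (f t) (s.indicator g (x - t)) := by
  obtain ⟨K, hK, hx₀⟩ := exists_compact_mem_nhds x₀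
  refine ⟨K - tsupport f, ?_, ?_⟩
  · exact sub_image_prod (s := K) ▸ (hK.prod hcf).image continuous_sub
  filter_upwards [hx₀] with x hx t
  by_cases ht : t ∈ tsupport f
  · rw [indicator_of_mem (sub_mem_sub hx ht)]
  · simp [image_eq_zero_of_notMem_tsupport ht]

theorem convolutionExists_of_memLp_top_of_locallyIntegrable
    (hf : MemLp f ∞ μ) (hcf : HasCompactSupport f) (hg : LocallyIntegrable g μ) :
    ConvolutionExists f g L μ := fun x => by
  obtain ⟨s, hs, hgs⟩ := exists_isCompact_forall_convolution_integrand_eq L hcf g x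
  have hgi : Integrable (s.indicator g) μ :=
    (hg.integrableOn_isCompact hs).integrable_indicator hs.measurableSet
  exact (convolutionExists_of_memLp_top_of_integrable L hf hgi x).congr
    (.of_forall fun t => (hgs.self_of_nhds t).symm)

theorem continuous_convolution_of_memLp_top_of_locallyIntegrable
    (hf : MemLp f ∞ μ) (hcf : HasCompactSupport f) (hg : LocallyIntegrable g μ) :
    Continuous (f ⋆[L, μ] g) := continuous_iff_continuousAt.2 fun x₀ => by
  obtain ⟨s, hs, hgs⟩ := exists_isCompact_forall_convolution_integrand_eq L hcf g x₀
  have hgi : Integrable (s.indicator g) μ :=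
    (hg.integrableOn_isCompact hs).integrable_indicator hs.measurableSet
  refine (continuous_convolution_of_memLp_top_of_integrable L hf hgi).continuousAt.congr ?_
  filter_upwards [hgs] with x hx
  exact (integral_congr_ae (.of_forall hx)).symm

theorem aestronglyMeasurable_convolution_integrand_comp {S : Type*} [MeasurableSpace S]
    {ν : Measure S} {γ : S → G} (hf : AEStronglyMeasurable f μ)
    (hg : AEStronglyMeasurable g μ) (hγ : Measurable γ) :
    AEStronglyMeasurable (fun p : S × G => L (f p.2) (g (γ p.1 - p.2))) (ν.prod μ) := by
  have hsub : Measure.QuasiMeasurePreserving (fun p : S × G => γ p.1 - p.2) (ν.prod μ) μ :=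
    QuasiMeasurePreserving.prod_of_right (by fun_prop)
      (.of_forall fun s => quasiMeasurePreserving_sub_left_of_right_invariant μ (γ s))
  exact L.aestronglyMeasurable_comp₂ hf.comp_snd (hg.comp_quasiMeasurePreserving hsub)

theorem integrable_convolution_integrand_comp {γ : ℝ → G} (hf : MemLp f ∞ μ)
    (hcf : HasCompactSupport f) (hg : LocallyIntegrable g μ) (hγ : Continuous γ) (a b : ℝ) :
    Integrable (fun p : ℝ × G => L (f p.2) (g (γ p.1 - p.2)))
      ((volume.restrict (Ι a b)).prod μ) := by
  have hg_norm : LocallyIntegrable (fun t => ‖g t‖) μ := fun t => (hg t).norm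
  have hmul : Integrable (fun p : ℝ × G => ‖f p.2‖ * ‖g (γ p.1 - p.2)‖)
      ((volume.restrict (Ι a b)).prod μ) := by
    have hexists := convolutionExists_of_memLp_top_of_locallyIntegrable (mul ℝ ℝ)
      hf.norm hcf.norm hg_norm
    refine (integrable_prod_iff (aestronglyMeasurable_convolution_integrand_comp (mul ℝ ℝ)
      hf.norm.1 hg_norm.aestronglyMeasurable hγ.measurable)).2
      ⟨.of_forall fun s => hexists (γ s), ?_⟩
    have hcont : Continuous fun s => ((fun t => ‖f t‖) ⋆[mul ℝ ℝ, μ] fun t => ‖g t‖) (γ s) :=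
      (continuous_convolution_of_memLp_top_of_locallyIntegrable _ hf.norm hcf.norm hg_norm).comp hγ
    have hint : Integrable _ (volume.restrict (Ι a b)) := hcont.integrableOn_uIoc
    simpa only [convolution_def, mul_apply', norm_mul, norm_norm] using hint
  refine (hmul.const_mul ‖L‖).mono' (aestronglyMeasurable_convolution_integrand_comp L
    hf.1 hg.aestronglyMeasurable hγ.measurable) (.of_forall fun p => ?_)
  simpa only [mul_assoc] using L.le_opNorm₂ (f p.2) (g (γ p.1 - p.2))

end Continuity

theorem hasFDerivAt_of_forall_sub_eq_intervalIntegral {E F : Type*}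
    [NormedAddCommGroup E] [NormedSpace ℝ E]
    [NormedAddCommGroup F] [NormedSpace ℝ F] [CompleteSpace F]
    {φ : E → F} {φ' : E → E →L[ℝ] F} {x : E} (hφ' : Continuous φ')
    (hφ : ∀ v, φ (x + v) - φ x = ∫ s in (0 : ℝ)..1, φ' (x + s • v) v) :
    HasFDerivAt φ (φ' x) x := by
  rw [hasFDerivAt_iff_isLittleO_nhds_zero, Asymptotics.isLittleO_iff]
  intro ε hε
  obtain ⟨δ, hδ, hball⟩ := Metric.continuousAt_iff.1 (hφ'.continuousAt (x := x)) ε hε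
  filter_upwards [Metric.ball_mem_nhds 0 hδ] with v hv
  have hsub : φ (x + v) - φ x - φ' x v = ∫ s in (0 : ℝ)..1, (φ' (x + s • v) - φ' x) v := by
    have hint : IntervalIntegrable (fun s : ℝ => φ' (x + s • v) v) volume 0 1 :=
      Continuous.intervalIntegrable (by fun_prop) 0 1
    simp only [sub_apply]
    rw [hφ, intervalIntegral.integral_sub hint intervalIntegrable_const]
    simp
  rw [hsub]
  refine (intervalIntegral.norm_integral_le_of_norm_le_const (C := ε * ‖v‖) fun s hs => ?_).trans
    (by simp)
  rw [uIoc_of_le zero_le_one] at hs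
  have hdist : dist (x + s • v) x < δ := by
    rw [dist_self_add_left, norm_smul, norm_of_nonneg hs.1.le]
    exact (mul_le_of_le_one_left (norm_nonneg v) hs.2).trans_lt (mem_ball_zero_iff.1 hv)
  exact le_of_opNorm_le _ (by simpa only [dist_eq_norm] using (hball hdist).le) v

section Differentiability

variable {G : Type*} [NormedAddCommGroup G] [NormedSpace ℝ G] [FiniteDimensional ℝ G]
  [MeasurableSpace G] [BorelSpace G] {μ : Measure G} [μ.IsAddHaarMeasure]

theorem ae_forall_add_smul_sub_ne_zero (hG : 1 < finrank ℝ G) (x v : G) :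
    ∀ᵐ y ∂μ, ∀ s : ℝ, x + s • v - y ≠ 0 := by
  have hspan : (ℝ ∙ v) ≠ ⊤ := (span_lt_top_of_card_lt_finrank (by simpa using hG)).ne
  have hline : ∀ᵐ z ∂μ, z ∉ (ℝ ∙ v) :=
    measure_eq_zero_iff_ae_notMem.1 (Measure.addHaar_submodule μ _ hspan)
  filter_upwards [(quasiMeasurePreserving_sub_left_of_right_invariant μ x).ae hline] with y hy s hs
  refine hy (Submodule.mem_span_singleton.2 ⟨-s, ?_⟩)
  rw [neg_smul, neg_eq_iff_add_eq_zero, ← hs]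
  abel

variable {E E' F : Type*} [NormedAddCommGroup E] [NormedSpace ℝ E] [NormedAddCommGroup E']
  [NormedSpace ℝ E'] [NormedAddCommGroup F] [NormedSpace ℝ F] [CompleteSpace F]
  (L : E →L[ℝ] E' →L[ℝ] F) {f : G → E} {k : G → E'} {k' : G → G →L[ℝ] E'}

theorem convolution_add_sub_convolution_eq_intervalIntegral (hG : 1 < finrank ℝ G)
    (hf : MemLp f ∞ μ) (hcf : HasCompactSupport f) (hk : LocallyIntegrable k μ)
    (hk' : LocallyIntegrable k' μ) (hderiv : ∀ z ≠ 0, HasFDerivAt k (k' z) z) (x v : G) :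
    (f ⋆[L, μ] k) (x + v) - (f ⋆[L, μ] k) x =
      ∫ s in (0 : ℝ)..1, (f ⋆[L.precompR G, μ] k') (x + s • v) v := by
  have hexists := convolutionExists_of_memLp_top_of_locallyIntegrable L hf hcf hk
  have hexists' := convolutionExists_of_memLp_top_of_locallyIntegrable (L.precompR G) hf hcf hk'
  have hint : Integrable (fun p : ℝ × G => L.precompR G (f p.2) (k' (x + p.1 • v - p.2)) v)
      ((volume.restrict (Ι 0 1)).prod μ) :=
    (integrable_convolution_integrand_comp (L.precompR G) hf hcf hk'
      (γ := fun s => x + s • v) (by fun_prop) 0 1).apply_continuousLinearMap v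
  have hftc : ∀ᵐ y ∂μ, L (f y) (k (x + v - y)) - L (f y) (k (x - y)) =
      ∫ s in (0 : ℝ)..1, L.precompR G (f y) (k' (x + s • v - y)) v := by
    filter_upwards [ae_forall_add_smul_sub_ne_zero hG x v, hint.prod_left_ae] with y hy hinty
    have hpath (s : ℝ) : HasDerivAt (fun s : ℝ => x + s • v - y) v s := by
      simpa using (((hasDerivAt_id s).smul_const v).const_add x).sub_const y
    have hderiv_path (s : ℝ) : HasDerivAt (fun s : ℝ => L (f y) (k (x + s • v - y)))
        (L.precompR G (f y) (k' (x + s • v - y)) v) s :=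
      (L (f y)).hasFDerivAt.comp_hasDerivAt s ((hderiv _ (hy s)).comp_hasDerivAt s (hpath s))
    rw [intervalIntegral.integral_eq_sub_of_hasDerivAt (fun s _ => hderiv_path s)
      (intervalIntegrable_iff.2 hinty)]
    simp only [one_smul, zero_smul, add_zero]
  calc (f ⋆[L, μ] k) (x + v) - (f ⋆[L, μ] k) x
      = ∫ y, (L (f y) (k (x + v - y)) - L (f y) (k (x - y))) ∂μ :=
        (integral_sub (hexists (x + v)) (hexists x)).symm
    _ = ∫ y, (∫ s in (0 : ℝ)..1, L.precompR G (f y) (k' (x + s • v - y)) v) ∂μ :=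
        integral_congr_ae hftc
    _ = ∫ s in (0 : ℝ)..1, (∫ y, L.precompR G (f y) (k' (x + s • v - y)) v ∂μ) :=
        (intervalIntegral_integral_swap hint).symm
    _ = ∫ s in (0 : ℝ)..1, (f ⋆[L.precompR G, μ] k') (x + s • v) v :=
        intervalIntegral.integral_congr fun s _ =>
          (ContinuousLinearMap.integral_apply (hexists' (x + s • v)) v).symm

theorem hasFDerivAt_convolution_right_of_forall_ne_zero (hG : 1 < finrank ℝ G)
    (hf : MemLp f ∞ μ) (hcf : HasCompactSupport f) (hk : LocallyIntegrable k μ)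
    (hk' : LocallyIntegrable k' μ) (hderiv : ∀ z ≠ 0, HasFDerivAt k (k' z) z) (x : G) :
    HasFDerivAt (f ⋆[L, μ] k) ((f ⋆[L.precompR G, μ] k') x) x :=
  hasFDerivAt_of_forall_sub_eq_intervalIntegral
    (continuous_convolution_of_memLp_top_of_locallyIntegrable (L.precompR G) hf hcf hk')
    (convolution_add_sub_convolution_eq_intervalIntegral L hG hf hcf hk hk' hderiv x)

theorem contDiff_one_convolution_right_of_forall_ne_zero (hG : 1 < finrank ℝ G)
    (hf : MemLp f ∞ μ) (hcf : HasCompactSupport f) (hk : LocallyIntegrable k μ)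
    (hk' : LocallyIntegrable k' μ) (hderiv : ∀ z ≠ 0, HasFDerivAt k (k' z) z) :
    ContDiff ℝ 1 (f ⋆[L, μ] k) :=
  contDiff_one_iff_hasFDerivAt.2 ⟨f ⋆[L.precompR G, μ] k',
    continuous_convolution_of_memLp_top_of_locallyIntegrable (L.precompR G) hf hcf hk',
    hasFDerivAt_convolution_right_of_forall_ne_zero L hG hf hcf hk hk' hderiv⟩

end Differentiability

section Gradient

variable {E : Type*} [NormedAddCommGroup E] [InnerProductSpace ℝ E] [FiniteDimensional ℝ E]
  [MeasurableSpace E] [BorelSpace E] {μ : Measure E} [μ.IsAddHaarMeasure]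
  {f k : E → ℝ} {K : E → E}

theorem contDiff_one_and_hasGradientAt_convolution_right_of_forall_ne_zero
    (hE : 1 < finrank ℝ E) (hf : MemLp f ∞ μ) (hcf : HasCompactSupport f)
    (hk : LocallyIntegrable k μ) (hK : LocallyIntegrable K μ)
    (hgrad : ∀ z ≠ 0, HasGradientAt k (K z) z) :
    ContDiff ℝ 1 (f ⋆[lsmul ℝ ℝ, μ] k) ∧
      ∀ x, HasGradientAt (f ⋆[lsmul ℝ ℝ, μ] k) ((f ⋆[lsmul ℝ ℝ, μ] K) x) x := by
  let D : E ≃L[ℝ] (E →L[ℝ] ℝ) := (InnerProductSpace.toDual ℝ E).toContinuousLinearEquiv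
  have hDK : LocallyIntegrable (fun z => D (K z)) μ := fun z =>
    let ⟨U, hU, hKU⟩ := hK z
    ⟨U, hU, (D : E →L[ℝ] E →L[ℝ] ℝ).integrable_comp hKU⟩
  have hderiv (z : E) (hz : z ≠ 0) : HasFDerivAt k (D (K z)) z := (hgrad z hz).hasFDerivAt
  refine ⟨contDiff_one_convolution_right_of_forall_ne_zero _ hE hf hcf hk hDK hderiv, fun x => ?_⟩
  have hcomm : (f ⋆[(lsmul ℝ ℝ).precompR E, μ] fun z => D (K z)) x =
      D ((f ⋆[lsmul ℝ ℝ, μ] K) x) := by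
    rw [convolution_def, convolution_def, ← D.integral_comp_comm]
    refine integral_congr_ae (.of_forall fun t => ?_)
    ext v
    simp
  exact hasGradientAt_iff_hasFDerivAt.2 <| hcomm ▸
    hasFDerivAt_convolution_right_of_forall_ne_zero _ hE hf hcf hk hDK hderiv x

end Gradient

theorem hasGradientAt_log_norm {E : Type*} [NormedAddCommGroup E] [InnerProductSpace ℝ E]
    [CompleteSpace E] {z : E} (hz : z ≠ 0) :
    HasGradientAt (fun z => log ‖z‖) ((‖z‖ ^ 2)⁻¹ • z) z := by
  have hlog : (fun z : E => log ‖z‖) = fun z => (1 / 2 : ℝ) * log (‖z‖ ^ 2) := by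
    ext z
    rw [log_pow]
    ring
  rw [hasGradientAt_iff_hasFDerivAt, hlog]
  convert! ((hasStrictFDerivAt_norm_sq z).hasFDerivAt.log (by simpa using hz)).const_mul
    (1 / 2 : ℝ) using 1
  ext v
  simp only [map_smul, smul_apply, InnerProductSpace.toDual_apply_apply, smul_eq_mul, one_div,
    coe_innerSL_apply, nsmul_eq_mul, Nat.cast_ofNat]
  ring

section LocalIntegrability

variable {E : Type*} [NormedAddCommGroup E] [NormedSpace ℝ E] [FiniteDimensional ℝ E]
  [MeasurableSpace E] [BorelSpace E] {μ : Measure E} [μ.IsAddHaarMeasure]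

theorem locallyIntegrable_inv_norm (hE : 1 < finrank ℝ E) :
    LocallyIntegrable (fun z : E => ‖z‖⁻¹) μ :=
  locallyIntegrable_of_norm_le_rpow (C := 1) (α := 1) hE.le (mod_cast hE)
    (.of_forall fun z => by simp [rpow_neg_one])
    (Measurable.aestronglyMeasurable (by fun_prop))

theorem locallyIntegrable_inv_norm_sq_smul (hE : 1 < finrank ℝ E) :
    LocallyIntegrable (fun z : E => (‖z‖ ^ 2)⁻¹ • z) μ := by
  refine (locallyIntegrable_inv_norm hE).mono (Measurable.aestronglyMeasurable (by fun_prop))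
    (.of_forall fun z => le_of_eq ?_)
  rw [norm_smul, norm_inv, norm_pow, norm_inv, norm_norm]
  rcases eq_or_ne ‖z‖ 0 with hz | hz
  · simp [hz]
  · field_simp

theorem locallyIntegrable_log_norm (hE : 1 < finrank ℝ E) :
    LocallyIntegrable (fun z : E => log ‖z‖) μ := by
  refine ((locallyIntegrable_inv_norm hE).add continuous_norm.locallyIntegrable).mono
    (Measurable.aestronglyMeasurable (by fun_prop)) (.of_forall fun z => ?_)
  have hz := norm_nonneg z
  rw [Pi.add_apply, norm_of_nonneg (add_nonneg (inv_nonneg.2 hz) hz), norm_eq_abs, abs_le]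
  constructor
  · linarith [neg_inv_le_log hz]
  · linarith [log_le_self hz, inv_nonneg.2 hz]

end LocalIntegrability

theorem indicator_convolution_lsmul {G F : Type*} [MeasurableSpace G] [Sub G] {μ : Measure G}
    [NormedAddCommGroup F] [NormedSpace ℝ F] {s : Set G} (hs : MeasurableSet s)
    (f : G → ℝ) (k : G → F) :
    s.indicator f ⋆[lsmul ℝ ℝ, μ] k = fun x => ∫ y in s, f y • k (x - y) ∂μ := by
  ext x
  simp only [convolution_lsmul, ← integral_indicator hs, indicator_smul_apply_left]

theorem volume_potential_C1_and_gradient_general {E : Type*} [NormedAddCommGroup E]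
    [InnerProductSpace ℝ E] [FiniteDimensional ℝ E] [MeasurableSpace E] [BorelSpace E]
    (hE : 1 < finrank ℝ E) (μ : Measure E) [μ.IsAddHaarMeasure] {Ω : Set E}
    (hmeas : MeasurableSet Ω) (hbdd : Bornology.IsBounded Ω) {f : E → ℝ}
    (hf : MemLp f ∞ (μ.restrict Ω)) :
    ContDiff ℝ 1 (fun x => ∫ y in Ω, f y * log ‖x - y‖ ∂μ) ∧
      ∀ x, gradient (fun x => ∫ y in Ω, f y * log ‖x - y‖ ∂μ) x =
        ∫ y in Ω, f y • (‖x - y‖ ^ 2)⁻¹ • (x - y) ∂μ := by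
  have hfΩ : MemLp (Ω.indicator f) ∞ μ := (memLp_indicator_iff_restrict hmeas).2 hf
  have hcf : HasCompactSupport (Ω.indicator f) :=
    .of_support_subset_isCompact hbdd.isCompact_closure
      (support_indicator_subset.trans subset_closure)
  have h := contDiff_one_and_hasGradientAt_convolution_right_of_forall_ne_zero hE hfΩ hcf
    (locallyIntegrable_log_norm hE) (locallyIntegrable_inv_norm_sq_smul hE)
    fun _ => hasGradientAt_log_norm
  simp only [indicator_convolution_lsmul hmeas, smul_eq_mul] at h
  exact ⟨h.1, fun x => (h.2 x).gradient⟩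

/-- For a bounded measurable `Ω ⊆ ℝ²` and a bounded measurable
density `f` on `Ω`, the volume potential `V f(x) = ∫_Ω (1/(2π)) log ‖x - y‖ f(y) dy`
is continuously differentiable on `ℝ²`, and its gradient is obtained by
differentiation under the integral sign:
`∇Vf(x) = ∫_Ω (x - y)/(2π ‖x - y‖²) f(y) dy` for every `x`. -/
theorem volume_potential_C1_and_gradient
    (Ω : Set (EuclideanSpace ℝ (Fin 2)))
    (hmeas : MeasurableSet Ω) (hbdd : Bornology.IsBounded Ω)
    (f : EuclideanSpace ℝ (Fin 2) → ℝ) (hf : Measurable f)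
    (M : ℝ) (hfM : ∀ y ∈ Ω, |f y| ≤ M) :
    ContDiff ℝ 1 (fun x => ∫ y in Ω, (1 / (2 * π)) * Real.log ‖x - y‖ * f y) ∧
    ∀ x, gradient (fun x => ∫ y in Ω, (1 / (2 * π)) * Real.log ‖x - y‖ * f y) x =
      ∫ y in Ω, f y • ((1 / (2 * π * ‖x - y‖ ^ 2)) • (x - y)) := by
  have hf_top : MemLp f ∞ (volume.restrict Ω) :=
    memLp_top_of_bound hf.aestronglyMeasurable M (ae_restrict_of_forall_mem hmeas hfM)
  simpa [smul_smul, mul_comm, mul_assoc, mul_left_comm] using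
    volume_potential_C1_and_gradient_general (by simp) volume hmeas hbdd
      (hf_top.const_mul (2 * π)⁻¹)
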